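/- arXiv:math/0512558 — 2 statements merged into one kernel-verified Lean document; each statement's English description precedes it below -/
import Mathlib

section
/- Let A be a finite-dimensional left-symmetric algebra over 𝕜, where 𝕜 = ℝ or 𝕜 = ℂ. Then the following conditions are equivalent: (a) R(x) is nilpotent for all x ∈ A; (b) det(id + R(x)) = 1 for all x ∈ A; (c) det(id + R(x)) ≠ 0 for all x ∈ A; (d) Tr R(x) = 0 for all x ∈ A. -/
/-!
Write `L(x)` for left multiplication. Left-symmetry says `R(x · y) = R(y) R(x) + [L(x), R(y)]`.

(d) ⇒ (a): taking traces against powers of `R(y)` kills the commutator, which gives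
`Tr (R(y)ᵏ R(x)) = Tr R(R(y)ᵏ x)`. If all `R(x)` are traceless, then so are all positive powers of
`R(x)`, which is therefore nilpotent in characteristic zero.

(c) ⇒ (d): fix `a`. Along an integral curve of the vector field `x ↦ a + a · x`, the operator
`G = id + R(x)` satisfies the linear equation `G' = L(a) G + G (R(a) - L(a))`, so by Jacobi's
formula `(det G)' = Tr R(a) · det G`. By Fitting's lemma there is a starting point `y` with
`L(a)ᴺ (a + a · y) = 0`; the curve through `y` is polynomial in the time, so `det G` is a
nonzero polynomial whose derivative is `Tr R(a)` times itself, and `Tr R(a)` vanishes by degree.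
-/

open Polynomial

section Jacobi

theorem derivation_prod {R S N ι : Type*} [CommSemiring R] [CommSemiring S] [AddCommMonoid N]
    [Algebra R S] [Module R N] [Module S N] [DecidableEq ι] (D : Derivation R S N) (s : Finset ι)
    (f : ι → S) : D (∏ i ∈ s, f i) = ∑ i ∈ s, (∏ j ∈ s.erase i, f j) • D (f i) := by
  induction s using Finset.induction_on with
  | empty => simp
  | insert a s ha ih =>
    have hterm (i : ι) (hi : i ∈ s) : (∏ j ∈ (insert a s).erase i, f j) • D (f i) =
        f a • (∏ j ∈ s.erase i, f j) • D (f i) := by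
      rw [Finset.erase_insert_of_ne (ne_of_mem_of_not_mem hi ha).symm,
        Finset.prod_insert (fun h ↦ ha (Finset.mem_of_mem_erase h)), mul_smul]
    rw [Finset.prod_insert ha, Finset.sum_insert ha, Finset.erase_insert ha,
      Finset.sum_congr rfl hterm, ← Finset.smul_sum, ← ih, D.leibniz, add_comm]

variable {R S n : Type*} [CommRing R] [CommRing S] [Algebra R S] [Fintype n] [DecidableEq n]

theorem derivation_det (D : Derivation R S S) (M : Matrix n n S) :
    D M.det = (M.adjugate * M.map D).trace := by
  have hdiag (i : n) : (M.adjugate * M.map D) i i =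
      (M.updateCol i fun j ↦ D (M j i)).det := by
    rw [← Matrix.cramer_apply, Matrix.cramer_eq_adjugate_mulVec]
    rfl
  have hterm (σ : Equiv.Perm n) (i : n) :
      ∏ j, (M.updateCol i fun k ↦ D (M k i)) (σ j) j =
        (∏ j ∈ Finset.univ.erase i, M (σ j) j) • D (M (σ i) i) := by
    rw [← Finset.prod_erase_mul _ _ (Finset.mem_univ i), Matrix.updateCol_self, smul_eq_mul]
    congr 1
    exact Finset.prod_congr rfl fun j hj ↦ Matrix.updateCol_ne (Finset.ne_of_mem_erase hj)
  simp only [Matrix.trace, Matrix.diag_apply, hdiag, Matrix.det_apply, hterm, map_sum]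
  rw [Finset.sum_comm]
  refine Finset.sum_congr rfl fun σ _ ↦ ?_
  rw [← Finset.smul_sum, ← derivation_prod, Units.smul_def, Units.smul_def, map_zsmul]

theorem derivation_det_of_map_eq_mul_add_mul (D : Derivation R S S) {L M B : Matrix n n S}
    (h : M.map D = L * M + M * B) : D M.det = (L.trace + B.trace) * M.det := by
  have hleft : (M.adjugate * (L * M)).trace = L.trace * M.det := by
    rw [Matrix.trace_mul_comm, mul_assoc, Matrix.mul_adjugate]
    simp [mul_comm]
  have hright : (M.adjugate * (M * B)).trace = B.trace * M.det := by
    rw [← mul_assoc, Matrix.adjugate_mul]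
    simp [mul_comm]
  rw [derivation_det, h, mul_add, Matrix.trace_add, hleft, hright, add_mul]

end Jacobi

theorem eq_zero_of_derivative_eq_C_mul {R : Type*} [CommRing R] [NoZeroDivisors R] {f : R[X]}
    {c : R} (hf : f ≠ 0) (h : derivative f = C c * f) : c = 0 := by
  by_contra hc
  have hlt := degree_derivative_lt hf
  rw [h, degree_C_mul hc] at hlt
  exact lt_irrefl _ hlt

section Sylvester

variable {K n : Type*} [Field K] [CharZero K] [Fintype n]

theorem exists_polynomialMatrix_derivative_eq {L B : Matrix n n K} {M : ℕ → Matrix n n K}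
    (hM : ∀ k, M (k + 1) = L * M k + M k * B) {N : ℕ} (hN : M N = 0) :
    ∃ G : Matrix n n K[X], G.map (eval 0) = M 0 ∧
      G.map derivative = L.map C * G + G * B.map C := by
  have hvanish (k : ℕ) (hk : N ≤ k) : M k = 0 := by
    induction k, hk using Nat.le_induction with
    | base => exact hN
    | succ k _ ih => rw [hM, ih, mul_zero, zero_mul, add_zero]
  let G : Matrix n n K[X] :=
    .of fun i j ↦ ∑ k ∈ Finset.range N, monomial k ((k.factorial : K)⁻¹ * M k i j)
  have hcoeff (i j : n) (k : ℕ) : (G i j).coeff k = (k.factorial : K)⁻¹ * M k i j := by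
    simp only [G, Matrix.of_apply, finsetSum_coeff, coeff_monomial, Finset.sum_ite_eq',
      Finset.mem_range, ite_eq_left_iff, not_lt]
    intro hk
    simp [hvanish k hk]
  refine ⟨G, ?_, ?_⟩
  · ext i j
    simp [← coeff_zero_eq_eval_zero, hcoeff]
  · ext i j k
    have hfactorial : ((k + 1).factorial : K)⁻¹ * (k + 1) = (k.factorial : K)⁻¹ := by
      have : (k : K) + 1 ≠ 0 := k.cast_add_one_ne_zero
      rw [Nat.factorial_succ]
      push_cast
      field_simp
    simp only [Matrix.map_apply, Matrix.add_apply, Matrix.mul_apply, coeff_derivative, coeff_add,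
      finsetSum_coeff, coeff_C_mul, coeff_mul_C, hcoeff]
    rw [mul_right_comm, hfactorial, hM, Matrix.add_apply, Matrix.mul_apply, Matrix.mul_apply,
      mul_add, Finset.mul_sum, Finset.mul_sum]
    simp only [mul_assoc, mul_left_comm]

theorem trace_add_trace_eq_zero_of_recurrence [DecidableEq n] {L B : Matrix n n K}
    {M : ℕ → Matrix n n K} (hM : ∀ k, M (k + 1) = L * M k + M k * B) {N : ℕ} (hN : M N = 0)
    (h₀ : (M 0).det ≠ 0) : L.trace + B.trace = 0 := by
  obtain ⟨G, hG₀, hG⟩ := exists_polynomialMatrix_derivative_eq hM hN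
  have hdet : G.det ≠ 0 := by
    intro h
    have := (evalRingHom (0 : K)).map_det G
    rw [h, map_zero, RingHom.mapMatrix_apply, coe_evalRingHom, hG₀] at this
    exact h₀ this.symm
  refine eq_zero_of_derivative_eq_C_mul hdet ?_
  have := derivation_det_of_map_eq_mul_add_mul derivative' hG
  have hC (Q : Matrix n n K) : (Q.map C).trace = C Q.trace := (AddMonoidHom.map_trace C Q).symm
  rwa [hC, hC, ← C_add] at this

end Sylvester

section Endomorphism

variable {R K V : Type*} [CommRing R] [Field K] [AddCommGroup V]

theorem trace_add_trace_eq_zero_of_pow_mulLeft_add_mulRight_apply_eq_zero [CharZero K] [Module K V]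
    [FiniteDimensional K V] {L B M : Module.End K V} {N : ℕ} (hM : IsUnit M)
    (h : ((LinearMap.mulLeft K L + LinearMap.mulRight K B) ^ N) M = 0) :
    LinearMap.trace K V L + LinearMap.trace K V B = 0 := by
  let b := Module.finBasis K V
  let S := LinearMap.mulLeft K L + LinearMap.mulRight K B
  let T := LinearMap.toMatrixAlgEquiv b
  have hrec (k : ℕ) : T ((S ^ (k + 1)) M) = T L * T ((S ^ k) M) + T ((S ^ k) M) * T B := by
    rw [pow_succ', Module.End.mul_apply, ← map_mul, ← map_mul, ← map_add]
    rfl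
  have hdet : (T ((S ^ 0) M)).det ≠ 0 := by
    rw [pow_zero, Module.End.one_apply]
    exact ((Matrix.isUnit_iff_isUnit_det _).mp (hM.map T)).ne_zero
  rw [LinearMap.trace_eq_matrix_trace K b, LinearMap.trace_eq_matrix_trace K b]
  exact trace_add_trace_eq_zero_of_recurrence (M := fun k ↦ T ((S ^ k) M)) hrec
    ((congrArg T h).trans (map_zero T)) hdet

theorem exists_pow_apply_add_apply_eq_zero [Module R V] [IsArtinian R V] (L : Module.End R V)
    (a : V) : ∃ (y : V) (N : ℕ), (L ^ N) (a + L y) = 0 := by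
  obtain ⟨N, hN⟩ := IsArtinian.monotone_stabilizes L.iterateRange
  obtain ⟨z, hz⟩ : (L ^ N) a ∈ LinearMap.range (L ^ (N + 1)) :=
    (hN (N + 1) N.le_succ).ge (LinearMap.mem_range_self (L ^ N) a)
  refine ⟨-z, N, ?_⟩
  rw [map_add, map_neg, map_neg, ← Module.End.mul_apply, ← pow_succ, hz, add_neg_cancel]

theorem det_one_add_eq_one_of_isNilpotent [IsDomain R] [Module R V] [Module.Finite R V]
    [Module.Free R V] {φ : Module.End R V} (h : IsNilpotent φ) : LinearMap.det (1 + φ) = 1 := by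
  have heval := (-φ).eval_charpoly 1
  rwa [h.neg.charpoly_eq_X_pow_finrank, eval_pow, eval_X, one_pow, map_one, sub_neg_eq_add,
    eq_comm] at heval

theorem exists_isIdempotentElem_aeval_mul_X {S : Type*} [Ring S] [Algebra K S] {a : S}
    (ha : IsIntegral K a) :
    ∃ (p : K[X]) (m : ℕ), IsIdempotentElem (aeval a (p * X)) ∧ aeval a (p * X) * a ^ m = a ^ m := by
  obtain ⟨q, hq, hXq⟩ :=
    (minpoly K a).exists_eq_pow_rootMultiplicity_mul_and_not_dvd (minpoly.ne_zero ha) 0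
  set m := (minpoly K a).rootMultiplicity 0
  rw [C_0, sub_zero] at hq hXq
  obtain ⟨u, v, huv⟩ : IsCoprime (X ^ (m + 1)) q :=
    (irreducible_X.coprime_iff_not_dvd.mpr hXq).pow_left
  have hann : aeval a (X ^ m * q) = 0 := hq ▸ minpoly.aeval K a
  have hidem : u * X ^ m * X * (u * X ^ m * X) = u * X ^ m * X - u * X * v * (X ^ m * q) := by
    linear_combination (u * X ^ (m + 1)) * huv
  have hfix : u * X ^ m * X * X ^ m = X ^ m - v * (X ^ m * q) := by
    linear_combination X ^ m * huv
  refine ⟨u * X ^ m, m, ?_, ?_⟩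
  · rw [IsIdempotentElem, ← map_mul, hidem, map_sub, map_mul _ (u * X * v), hann, mul_zero,
      sub_zero]
  · rw [← aeval_X_pow (R := K) a, ← map_mul, hfix, map_sub, map_mul _ v, hann, mul_zero, sub_zero]

theorem isNilpotent_of_forall_trace_pow_succ_eq_zero [CharZero K] [Module K V]
    [FiniteDimensional K V] {φ : Module.End K V}
    (h : ∀ k, LinearMap.trace K V (φ ^ (k + 1)) = 0) : IsNilpotent φ := by
  obtain ⟨p, m, hidem, hfix⟩ :=
    exists_isIdempotentElem_aeval_mul_X (Algebra.IsIntegral.isIntegral (R := K) φ)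
  have htrace : LinearMap.trace K V (aeval φ (p * X)) = 0 := by
    rw [map_mul, aeval_X, aeval_eq_sum_range, Finset.sum_mul, map_sum]
    refine Finset.sum_eq_zero fun i _ ↦ ?_
    rw [smul_mul_assoc, ← pow_succ, map_smul, h, smul_zero]
  rw [(LinearMap.IsIdempotentElem.trace_eq_zero_iff hidem).mp htrace, zero_mul] at hfix
  exact ⟨m, hfix.symm⟩

end Endomorphism

/-- The bilinear product `mul` on `A` makes it a left-symmetric (pre-Lie) algebra. As a predicate on
the product, rather than a class such as `LeftPreLieRing`, it makes left and right multiplication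
by `x` available as the linear maps `mul x` and `mul.flip x`. -/
def IsLeftSymmetric {R A : Type*} [CommRing R] [AddCommGroup A] [Module R A]
    (mul : A →ₗ[R] A →ₗ[R] A) : Prop :=
  ∀ x y z : A, mul x (mul y z) - mul (mul x y) z = mul y (mul x z) - mul (mul y x) z

namespace IsLeftSymmetric

section CommRing

variable {R A : Type*} [CommRing R] [AddCommGroup A] [Module R A] {mul : A →ₗ[R] A →ₗ[R] A}

theorem flip_mul_apply (hmul : IsLeftSymmetric mul) (x y : A) :
    mul.flip (mul x y) = mul x * mul.flip y + mul.flip y * (mul.flip x - mul x) := by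
  ext z
  have := hmul x z y
  simp only [LinearMap.flip_apply, LinearMap.add_apply, LinearMap.sub_apply, Module.End.mul_apply,
    map_sub]
  grind

theorem pow_mulLeft_add_mulRight_apply_one_add_flip (hmul : IsLeftSymmetric mul) (a y : A)
    (k : ℕ) :
    ((LinearMap.mulLeft R (mul a) + LinearMap.mulRight R (mul.flip a - mul a)) ^ (k + 1))
      (1 + mul.flip y) = mul.flip ((mul a ^ k) (a + mul a y)) := by
  induction k with
  | zero =>
    simp only [zero_add, pow_one, pow_zero, Module.End.one_apply, LinearMap.add_apply,
      LinearMap.mulLeft_apply, LinearMap.mulRight_apply, map_add, hmul.flip_mul_apply a y]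
    noncomm_ring
  | succ k ih =>
    rw [pow_succ', Module.End.mul_apply, ih, pow_succ' (mul a), Module.End.mul_apply,
      hmul.flip_mul_apply, LinearMap.add_apply, LinearMap.mulLeft_apply,
      LinearMap.mulRight_apply]

theorem trace_flip_pow_mul_flip (hmul : IsLeftSymmetric mul) (x y : A) (k : ℕ) :
    LinearMap.trace R A (mul.flip y ^ k * mul.flip x) =
      LinearMap.trace R A (mul.flip ((mul.flip y ^ k) x)) := by
  induction k generalizing x with
  | zero => simp
  | succ k ih =>
    have hcomm : LinearMap.trace R A (mul.flip y ^ k * (mul x * mul.flip y)) =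
        LinearMap.trace R A (mul.flip y ^ k * (mul.flip y * mul x)) := by
      rw [LinearMap.trace_mul_cycle', ← mul_assoc, ← mul_assoc, ← pow_succ, ← pow_succ']
    calc LinearMap.trace R A (mul.flip y ^ (k + 1) * mul.flip x)
      _ = LinearMap.trace R A (mul.flip y ^ k * mul.flip (mul x y)) := by
        rw [hmul.flip_mul_apply, mul_sub, mul_add, mul_sub, map_add, map_sub, hcomm, pow_succ,
          mul_assoc]
        abel
      _ = LinearMap.trace R A (mul.flip ((mul.flip y ^ (k + 1)) x)) := by
        rw [ih, pow_succ, Module.End.mul_apply, LinearMap.flip_apply]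

end CommRing

section Field

variable {K A : Type*} [Field K] [CharZero K] [AddCommGroup A] [Module K A]
  [FiniteDimensional K A] {mul : A →ₗ[K] A →ₗ[K] A}

theorem trace_flip_eq_zero_of_forall_isUnit (hmul : IsLeftSymmetric mul)
    (h : ∀ x, IsUnit (1 + mul.flip x)) (a : A) : LinearMap.trace K A (mul.flip a) = 0 := by
  obtain ⟨y, N, hN⟩ := exists_pow_apply_add_apply_eq_zero (mul a) a
  have hiterate := hmul.pow_mulLeft_add_mulRight_apply_one_add_flip a y N
  rw [hN, map_zero] at hiterate
  have := trace_add_trace_eq_zero_of_pow_mulLeft_add_mulRight_apply_eq_zero (h y) hiterate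
  rwa [map_sub, add_sub_cancel] at this

theorem isNilpotent_flip_of_forall_trace_eq_zero (hmul : IsLeftSymmetric mul)
    (h : ∀ x, LinearMap.trace K A (mul.flip x) = 0) (x : A) : IsNilpotent (mul.flip x) :=
  isNilpotent_of_forall_trace_pow_succ_eq_zero fun k ↦ by
    rw [pow_succ, hmul.trace_flip_pow_mul_flip, h]

end Field

end IsLeftSymmetric

theorem leftSymmetric_completeness_criteria_general (K : Type*) [Field K] [CharZero K]
    (A : Type*) [AddCommGroup A] [Module K A] [FiniteDimensional K A]
    (mul : A →ₗ[K] A →ₗ[K] A) (hmul : IsLeftSymmetric mul) :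
    List.TFAE
      [∀ x : A, IsNilpotent (mul.flip x),
       ∀ x : A, LinearMap.det (LinearMap.id + mul.flip x) = 1,
       ∀ x : A, LinearMap.det (LinearMap.id + mul.flip x) ≠ 0,
       ∀ x : A, LinearMap.trace K A (mul.flip x) = 0] := by
  tfae_have 1 → 2 := fun h x ↦ det_one_add_eq_one_of_isNilpotent (h x)
  tfae_have 2 → 3 := fun h x ↦ by simp [h x]
  tfae_have 3 → 4 := fun h ↦ hmul.trace_flip_eq_zero_of_forall_isUnit fun x ↦
    (LinearMap.isUnit_iff_isUnit_det _).mpr (h x).isUnit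
  tfae_have 4 → 1 := hmul.isNilpotent_flip_of_forall_trace_eq_zero
  tfae_finish

/-- Completeness criteria for a finite-dimensional left-symmetric algebra over `ℝ` or `ℂ`:
(a) every `R(x)` is nilpotent; (b) `det(id + R(x)) = 1` always;
(c) `det(id + R(x)) ≠ 0` always; (d) `Tr R(x) = 0` always. -/
theorem leftSymmetric_completeness_criteria (𝕜 : Type*) [RCLike 𝕜] (A : Type*)
    [AddCommGroup A] [Module 𝕜 A] [FiniteDimensional 𝕜 A]
    (mul : A →ₗ[𝕜] A →ₗ[𝕜] A)
    (hls : ∀ x y z : A,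
      mul x (mul y z) - mul (mul x y) z = mul y (mul x z) - mul (mul y x) z) :
    List.TFAE
      [∀ x : A, IsNilpotent (mul.flip x),
       ∀ x : A, LinearMap.det (LinearMap.id + mul.flip x) = 1,
       ∀ x : A, LinearMap.det (LinearMap.id + mul.flip x) ≠ 0,
       ∀ x : A, LinearMap.trace 𝕜 A (mul.flip x) = 0] :=
  leftSymmetric_completeness_criteria_general 𝕜 A mul hls
end

section
/- Let A be a finite-dimensional complete left-symmetric algebra over ℂ. If H₁ and H₂ are Cartan subalgebras of the commutator Lie algebra of A for each of which the root decomposition is canonical (i.e., for i = 1,2 and every χ : Hᵢ → ℂ, ⋂_{x∈Hᵢ} maxGenEigenspace(L(x), χ(x)) = ⋂_{x∈Hᵢ} maxGenEigenspace(ad(x), χ(x))), then H₁ = H₂. In other words, the canonical decomposition of a complete left-symmetric algebra is unique. -/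
/-!
A canonical root decomposition makes the generalized eigenspaces of `L(x)` and `ad(x)` agree for
every `x` in the Cartan subalgebra. Choose `y ∈ H₂` separating the roots of `H₂`. Since the
generalized eigenspaces of `ad(y)` and `L(y)` agree, the product is graded by them, so the
semisimple part of `ad(y)` is a derivation `δ` of the product. Derivations preserve Cartan
subalgebras with canonical decomposition, hence `δ` preserves `H₁`, and `H₁` is the sum of its
intersections with the root spaces of `H₂`. The part of `H₁` in a nonzero root space acts
nilpotently, so it is killed by every root of `H₁`; the part in the zero root space lies in `H₂`.
Thus the roots of `H₁` are determined by their values on `H₁ ∩ H₂`, and as `H₁ ∩ H₂` acts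
nilpotently on `H₂`, so does `H₁`, which means `H₂ ≤ H₁`. The roles being symmetric, `H₁ = H₂`.
-/

open Module Module.End LieAlgebra LieModule

section Endomorphism

section CommRing

variable {R M : Type*} [CommRing R] [AddCommGroup M] [Module R M]

theorem mem_maxGenEigenspace_of_apply_sub_smul_mem {T : End R M} {μ : R} {v : M}
    (h : T v - μ • v ∈ T.maxGenEigenspace μ) : v ∈ T.maxGenEigenspace μ := by
  rw [mem_maxGenEigenspace] at h ⊢
  obtain ⟨k, hk⟩ := h
  exact ⟨k + 1, by simpa [pow_succ] using hk⟩

theorem apply_mem_maxGenEigenspace_of_commutator_mem {T D : End R M} {μ : R}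
    (hD : ∀ v ∈ T.maxGenEigenspace μ, T (D v) - D (T v) ∈ T.maxGenEigenspace μ)
    {v : M} (hv : v ∈ T.maxGenEigenspace μ) : D v ∈ T.maxGenEigenspace μ := by
  obtain ⟨k, hk⟩ := (mem_maxGenEigenspace ..).mp hv
  induction k generalizing v with
  | zero => simp_all
  | succ k ih =>
    have hk' : ((T - μ • (1 : End R M)) ^ k) (T v - μ • v) = 0 := by
      simpa [pow_succ] using hk
    have hDTv := ih ((mem_maxGenEigenspace ..).mpr ⟨k, hk'⟩) hk'
    apply mem_maxGenEigenspace_of_apply_sub_smul_mem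
    convert add_mem (hD v hv) hDTv using 1
    rw [map_sub, map_smul]
    abel

end CommRing

variable {K V : Type*} [Field K] [AddCommGroup V] [Module K V] [FiniteDimensional K V]

theorem maxGenEigenspace_zero_sup_range_eq_top (T : End K V) :
    T.maxGenEigenspace 0 ⊔ LinearMap.range T = ⊤ := by
  have hker : T.maxGenEigenspace 0 = ⨆ n : ℕ, LinearMap.ker (T ^ n) := by
    simp [← iSup_genEigenspace_eq]
  rw [eq_top_iff, hker, ← T.isCompl_iSup_ker_pow_iInf_range_pow.sup_eq_top]
  exact sup_le_sup_left ((iInf_le _ 1).trans_eq (by rw [pow_one])) _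

theorem exists_eigenspace_eq_maxGenEigenspace [PerfectField K] {T : End K V}
    (hT : ⨆ μ, T.maxGenEigenspace μ = ⊤) :
    ∃ S : End K V, ∀ μ, S.eigenspace μ = T.maxGenEigenspace μ := by
  obtain ⟨N, -, S, hS, hN, hss, hTNS⟩ := T.exists_isNilpotent_isSemisimple
  have hle : T.maxGenEigenspace ≤ S.eigenspace := fun μ v hv ↦ by
    have hNil : IsNilpotent (T - S) := by rwa [hTNS, add_sub_cancel_right]
    exact mem_eigenspace_iff.mpr <| apply_eq_of_mem_of_comm_of_isFinitelySemisimple_of_isNil hv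
      (Algebra.commute_of_mem_adjoin_self hS) hss.isFinitelySemisimple hNil
  have heq := (S.eigenspaces_iSupIndep.le_iff_eq_of_iSup_eq_top hT).mp hle
  exact ⟨S, fun μ ↦ (congrFun heq μ).symm⟩

end Endomorphism

section Weights

theorem toSubmodule_genWeightSpace {R L M : Type*} [CommRing R] [LieRing L] [LieAlgebra R L]
    [LieRing.IsNilpotent L] [AddCommGroup M] [Module R M] [LieRingModule L M] [LieModule R L M]
    (χ : L → R) :
    (genWeightSpace M χ).toSubmodule = ⨅ x, (toEnd R L M x).maxGenEigenspace (χ x) := by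
  rw [genWeightSpace, LieSubmodule.iInf_toSubmodule]
  rfl

variable {K L M : Type*} [Field K] [LieRing L] [LieAlgebra K L] [LieRing.IsNilpotent L]
  [AddCommGroup M] [Module K M] [LieRingModule L M] [LieModule K L M] [FiniteDimensional K M]

variable (K L M) in
theorem exists_injective_weight_apply [Infinite K] [LinearWeights K L M] :
    ∃ x : L, Function.Injective fun χ : Weight K L M ↦ χ x := by
  obtain ⟨x, hx⟩ := Module.Dual.exists_forall_ne_zero_of_forall_exists
    (fun p : {p : Weight K L M × Weight K L M // p.1 ≠ p.2} ↦
      Weight.toLinear K L M p.1.1 - Weight.toLinear K L M p.1.2) fun p ↦ by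
    by_contra! h
    exact p.2 (Weight.ext fun x ↦ sub_eq_zero.mp (h x))
  refine ⟨x, fun χ χ' h ↦ ?_⟩
  by_contra hne
  exact hx ⟨(χ, χ'), hne⟩ (sub_eq_zero.mpr h)

variable [IsTriangularizable K L M]

theorem maxGenEigenspace_toEnd_eq_iSup_genWeightSpace (x : L) (μ : K) :
    (toEnd K L M x).maxGenEigenspace μ =
      ⨆ (χ : Weight K L M) (_ : χ x = μ), (genWeightSpace M χ).toSubmodule := by
  let W (μ : K) := ⨆ (χ : Weight K L M) (_ : χ x = μ), (genWeightSpace M χ).toSubmodule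
  have hle : W ≤ (toEnd K L M x).maxGenEigenspace := fun μ ↦
    iSup₂_le fun χ hχ ↦ hχ ▸ genWeightSpace_le_genWeightSpaceOf M x χ
  have htop : ⨆ μ, W μ = ⊤ := by
    rw [eq_top_iff, ← LieSubmodule.top_toSubmodule (R := K) (L := L),
      ← iSup_genWeightSpace_eq_top' K L M, LieSubmodule.iSup_toSubmodule]
    exact iSup_le fun χ ↦ le_iSup_of_le (χ x) (le_iSup₂_of_le χ rfl le_rfl)
  have hindep := (toEnd K L M x).independent_maxGenEigenspace
  exact (congrFun ((hindep.le_iff_eq_of_iSup_eq_top htop).mp hle) μ).symm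

theorem maxGenEigenspace_toEnd_eq_bot_or_eq_genWeightSpace {x : L}
    (hx : Function.Injective fun χ : Weight K L M ↦ χ x) (μ : K) :
    (toEnd K L M x).maxGenEigenspace μ = ⊥ ∨ ∃ χ : Weight K L M,
      (toEnd K L M x).maxGenEigenspace μ = (genWeightSpace M χ).toSubmodule := by
  rw [maxGenEigenspace_toEnd_eq_iSup_genWeightSpace]
  by_cases hμ : ∃ χ : Weight K L M, χ x = μ
  · obtain ⟨χ, rfl⟩ := hμ
    refine .inr ⟨χ, le_antisymm (iSup₂_le fun χ' hχ' ↦ ?_) (le_iSup₂_of_le χ rfl le_rfl)⟩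
    rw [hx hχ']
  · push Not at hμ
    simp [hμ]

end Weights

section Cartan

theorem iSup_maxGenEigenspace_ad_eq_top {R L : Type*} [CommRing R] [LieRing L] [LieAlgebra R L]
    (H : LieSubalgebra R L) [IsTriangularizable R H L] {x : L} (hx : x ∈ H) :
    ⨆ μ, (ad R L x).maxGenEigenspace μ = ⊤ :=
  IsTriangularizable.maxGenEigenspace_eq_top (M := L) (⟨x, hx⟩ : H)

variable {K L : Type*} [Field K] [LieRing L] [LieAlgebra K L] [FiniteDimensional K L]
  (H : LieSubalgebra K L)

theorem maxGenEigenspace_ad_zero_eq_of_forall_weight_apply_eq [LieRing.IsNilpotent H]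
    [IsTriangularizable K H L] {x x' : H} (h : ∀ χ : Weight K H L, χ x = χ x') :
    (ad K L x).maxGenEigenspace 0 = (ad K L x').maxGenEigenspace 0 := by
  change (toEnd K H L x).maxGenEigenspace 0 = (toEnd K H L x').maxGenEigenspace 0
  simp only [maxGenEigenspace_toEnd_eq_iSup_genWeightSpace, h]

theorem mem_cartan_iff_forall_mem_maxGenEigenspace_ad [H.IsCartanSubalgebra] {u : L} :
    u ∈ H ↔ ∀ x ∈ H, u ∈ (ad K L x).maxGenEigenspace 0 := by
  rw [← LieSubalgebra.mem_toLieSubmodule, ← rootSpace_zero_eq K L H,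
    ← LieSubmodule.mem_toSubmodule, toSubmodule_genWeightSpace]
  simp only [Submodule.mem_iInf, Subtype.forall]
  rfl

end Cartan

section LeftSymmetric

variable {K A : Type*}

section CommRing

variable [CommRing K] [LieRing A] [LieAlgebra K A]

/-- A left-symmetric product whose commutator is the Lie bracket of the underlying Lie algebra. The
product is a bilinear map, so `mul x` and `mul.flip x` are the operators `L(x)` and `R(x)`. -/
structure IsLeftSymmetric_s12 (mul : A →ₗ[K] A →ₗ[K] A) : Prop where
  lie_eq : ∀ x y : A, ⁅x, y⁆ = mul x y - mul y x
  left_symm : ∀ x y z : A,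
    mul x (mul y z) - mul (mul x y) z = mul y (mul x z) - mul (mul y x) z

/-- The root decomposition with respect to `H` is canonical: the weight spaces of `H` acting by left
multiplications are its root spaces. The adjoint operator `ad(x)` is written `L(x) - R(x)`. -/
def HasCanonicalRootDecomposition (mul : A →ₗ[K] A →ₗ[K] A) (H : LieSubalgebra K A) : Prop :=
  ∀ χ : H → K,
    (⨅ x : H, maxGenEigenspace (mul (x : A)) (χ x)) =
      ⨅ x : H, maxGenEigenspace (mul (x : A) - mul.flip (x : A)) (χ x)

/-- A derivation of a product that is given as a bilinear map. -/
def IsMulDerivation {R M : Type*} [CommRing R] [AddCommGroup M] [Module R M]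
    (mul : M →ₗ[R] M →ₗ[R] M) (δ : End R M) : Prop :=
  ∀ a b, δ (mul a b) = mul (δ a) b + mul a (δ b)

namespace IsLeftSymmetric_s12

variable {mul : A →ₗ[K] A →ₗ[K] A} (hA : IsLeftSymmetric_s12 mul)
include hA

theorem sub_flip_eq_ad (x : A) : mul x - mul.flip x = ad K A x := by
  ext y
  simp [hA.lie_eq]

theorem mul_lie (x y z : A) : mul ⁅x, y⁆ z = mul x (mul y z) - mul y (mul x z) := by
  rw [hA.lie_eq, map_sub, LinearMap.sub_apply]
  linear_combination (norm := module) -hA.left_symm x y z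

/-- The action of `A` on itself by left multiplications, which by left symmetry is a Lie module
structure. It is not an instance because it differs from the adjoint action. -/
abbrev lieRingModule : LieRingModule A A where
  bracket x y := mul x y
  add_lie x y m := LinearMap.map_add₂ mul x y m
  lie_add x m n := map_add (mul x) m n
  leibniz_lie x y m := by
    change mul x (mul y m) = mul ⁅x, y⁆ m + mul y (mul x m)
    rw [hA.mul_lie, sub_add_cancel]

theorem lieModule : @LieModule K A A _ _ _ _ _ hA.lieRingModule :=
  letI := hA.lieRingModule
  { smul_lie := fun t x m ↦ LinearMap.map_smul₂ mul t x m
    lie_smul := fun t x m ↦ map_smul (mul x) t m }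

theorem mul_mem_maxGenEigenspace_add {x a b : A} {μ ν : K}
    (ha : a ∈ (ad K A x).maxGenEigenspace μ) (hb : b ∈ maxGenEigenspace (mul x) ν) :
    mul a b ∈ maxGenEigenspace (mul x) (μ + ν) :=
  @lie_mem_maxGenEigenspace_toEnd K A A _ _ _ _ _ hA.lieRingModule hA.lieModule μ ν x a b ha hb

end IsLeftSymmetric_s12

section Derivation

variable {mul : A →ₗ[K] A →ₗ[K] A} {δ : End K A} {x : A}

theorem IsLeftSymmetric_s12.isMulDerivation_of_eigenspace_eq (hA : IsLeftSymmetric_s12 mul)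
    (hx : ∀ μ, maxGenEigenspace (mul x) μ = (ad K A x).maxGenEigenspace μ)
    (htop : ⨆ μ, (ad K A x).maxGenEigenspace μ = ⊤)
    (hδ : ∀ μ, δ.eigenspace μ = (ad K A x).maxGenEigenspace μ) : IsMulDerivation mul δ := by
  intro a b
  induction (htop ▸ Submodule.mem_top : a ∈ _) using Submodule.iSup_induction' with
  | zero => simp
  | add a a' _ _ ha ha' =>
    simp only [map_add, LinearMap.add_apply, ha, ha']
    abel
  | mem μ a ha =>
    induction (htop ▸ Submodule.mem_top : b ∈ _) using Submodule.iSup_induction' with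
    | zero => simp
    | add b b' _ _ hb hb' =>
      simp only [map_add, hb, hb']
      abel
    | mem ν b hb =>
      have hab : mul a b ∈ δ.eigenspace (μ + ν) := by
        rw [hδ, ← hx]
        exact hA.mul_mem_maxGenEigenspace_add ha (hx ν ▸ hb)
      rw [← hδ, mem_eigenspace_iff] at ha hb
      rw [mem_eigenspace_iff.mp hab, ha, hb]
      simp [add_smul]

theorem IsMulDerivation.add_mul_mem_maxGenEigenspace (hδ : IsMulDerivation mul δ)
    (hA : IsLeftSymmetric_s12 mul) {u w v : A} {μ : K} (hu : u ∈ (ad K A x).maxGenEigenspace 0)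
    (hδx : δ x = u + ⁅x, w⁆) (hv : v ∈ maxGenEigenspace (mul x) μ) :
    δ v + mul w v ∈ maxGenEigenspace (mul x) μ := by
  refine apply_mem_maxGenEigenspace_of_commutator_mem (D := δ + mul w) (fun v hv ↦ ?_) hv
  have hcomm : mul x ((δ + mul w) v) - (δ + mul w) (mul x v) = -mul u v := by
    simp only [LinearMap.add_apply, hδ x v, hδx, map_add, hA.mul_lie]
    abel
  rw [hcomm, ← zero_add μ]
  exact neg_mem (hA.mul_mem_maxGenEigenspace_add hu hv)

end Derivation

end CommRing

variable [Field K] [LieRing A] [LieAlgebra K A] [FiniteDimensional K A]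
  {mul : A →ₗ[K] A →ₗ[K] A}

/-- Writing `δ x = u + [x, w]` with `u` in the generalized kernel of `ad(x)`, the operator
`δ + L(w)` preserves the generalized eigenspaces of `L(x)`. Evaluating it at `x` itself shows that
`w` lies in the generalized kernel too, so that `L(w)` can be subtracted again. -/
theorem IsMulDerivation.apply_mem_maxGenEigenspace {δ : End K A} (hδ : IsMulDerivation mul δ)
    (hA : IsLeftSymmetric_s12 mul) {x : A}
    (hx : maxGenEigenspace (mul x) 0 = (ad K A x).maxGenEigenspace 0)
    {v : A} {μ : K} (hv : v ∈ maxGenEigenspace (mul x) μ) :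
    δ v ∈ maxGenEigenspace (mul x) μ := by
  obtain ⟨u, hu, _, ⟨w, rfl⟩, hδx⟩ := Submodule.mem_sup.mp <|
    show δ x ∈ _ from maxGenEigenspace_zero_sup_range_eq_top (ad K A x) ▸ Submodule.mem_top
  have hD {v : A} {μ : K} (hv : v ∈ maxGenEigenspace (mul x) μ) :
      δ v + mul w v ∈ maxGenEigenspace (mul x) μ :=
    hδ.add_mul_mem_maxGenEigenspace hA hu hδx.symm hv
  have hxx : x ∈ maxGenEigenspace (mul x) 0 := by
    rw [hx]
    exact mem_maxGenEigenspace_of_apply_sub_smul_mem (by simp)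
  have hw : w ∈ (ad K A x).maxGenEigenspace 0 := by
    rw [← hx]
    apply mem_maxGenEigenspace_of_apply_sub_smul_mem
    have hxw : mul x w - (0 : K) • w = δ x + mul w x - u := by
      rw [← hδx, ad_apply, hA.lie_eq]
      module
    rw [hxw]
    exact sub_mem (hD hxx) (hx ▸ hu)
  have hwv : mul w v ∈ maxGenEigenspace (mul x) μ := by
    simpa only [zero_add] using hA.mul_mem_maxGenEigenspace_add hw hv
  simpa only [add_sub_cancel_right] using sub_mem (hD hv) hwv

namespace HasCanonicalRootDecomposition

section SingleSubalgebra

variable {H : LieSubalgebra K A} [LieRing.IsNilpotent H] [IsTriangularizable K H A]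
  (hH : HasCanonicalRootDecomposition mul H) (hA : IsLeftSymmetric_s12 mul)
include hH hA

theorem maxGenEigenspace_mul_eq {x : A} (hx : x ∈ H) (μ : K) :
    maxGenEigenspace (mul x) μ = (ad K A x).maxGenEigenspace μ := by
  have hle : (ad K A x).maxGenEigenspace ≤ maxGenEigenspace (mul x) := fun μ ↦ by
    refine (maxGenEigenspace_toEnd_eq_iSup_genWeightSpace (⟨x, hx⟩ : H) μ).trans_le <|
      iSup₂_le fun χ hχ ↦ ?_
    have hcanon := hH χ
    simp only [hA.sub_flip_eq_ad] at hcanon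
    rw [toSubmodule_genWeightSpace, ← hχ]
    exact hcanon.ge.trans (iInf_le _ (⟨x, hx⟩ : H))
  have htop := iSup_maxGenEigenspace_ad_eq_top H hx
  have hindep := independent_maxGenEigenspace (mul x)
  exact (congrFun ((hindep.le_iff_eq_of_iSup_eq_top htop).mp hle) μ).symm

/-- The derivation is the semisimple part of `ad(x)`. -/
theorem exists_isMulDerivation_eigenspace_eq [PerfectField K] {x : A} (hx : x ∈ H) :
    ∃ δ : End K A, IsMulDerivation mul δ ∧
      ∀ μ, δ.eigenspace μ = (ad K A x).maxGenEigenspace μ := by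
  have htop := iSup_maxGenEigenspace_ad_eq_top H hx
  obtain ⟨δ, hδ⟩ := exists_eigenspace_eq_maxGenEigenspace htop
  exact ⟨δ, hA.isMulDerivation_of_eigenspace_eq (hH.maxGenEigenspace_mul_eq hA hx) htop hδ, hδ⟩

end SingleSubalgebra

theorem derivation_apply_mem {H : LieSubalgebra K A} [H.IsCartanSubalgebra]
    [IsTriangularizable K H A] (hH : HasCanonicalRootDecomposition mul H)
    (hA : IsLeftSymmetric_s12 mul) {δ : End K A} (hδ : IsMulDerivation mul δ)
    {u : A} (hu : u ∈ H) : δ u ∈ H := by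
  rw [mem_cartan_iff_forall_mem_maxGenEigenspace_ad] at hu ⊢
  intro x hx
  rw [← hH.maxGenEigenspace_mul_eq hA hx]
  refine hδ.apply_mem_maxGenEigenspace hA (hH.maxGenEigenspace_mul_eq hA hx 0) ?_
  rw [hH.maxGenEigenspace_mul_eq hA hx]
  exact hu x hx

section TwoCartans

variable [CharZero K] (hA : IsLeftSymmetric_s12 mul) {H₁ H₂ : LieSubalgebra K A}
  [H₁.IsCartanSubalgebra] [H₂.IsCartanSubalgebra]
  [IsTriangularizable K H₁ A] [IsTriangularizable K H₂ A]
  (h₁ : HasCanonicalRootDecomposition mul H₁) (h₂ : HasCanonicalRootDecomposition mul H₂)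
include hA h₁ h₂

theorem toSubmodule_le_iSup_inf_rootSpace :
    H₁.toSubmodule ≤ ⨆ α : Weight K H₂ A, H₁.toSubmodule ⊓ (rootSpace H₂ α).toSubmodule := by
  obtain ⟨y, hy⟩ := exists_injective_weight_apply K H₂ A
  obtain ⟨δ, hder, hδ⟩ := h₂.exists_isMulDerivation_eigenspace_eq hA y.2
  have htop : ⨆ μ, δ.eigenspace μ = ⊤ := by
    simp only [hδ]
    exact iSup_maxGenEigenspace_ad_eq_top H₂ y.2
  refine (Submodule.eq_iSup_inf_genEigenspace 1
    (fun u hu ↦ h₁.derivation_apply_mem hA hder hu) htop).trans_le (iSup_le fun μ ↦ ?_)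
  change _ ⊓ δ.eigenspace μ ≤ _
  rw [hδ]
  obtain hμ | ⟨α, hα⟩ := maxGenEigenspace_toEnd_eq_bot_or_eq_genWeightSpace hy μ
  · exact inf_le_right.trans (hμ.trans_le bot_le)
  · exact le_iSup_of_le α (inf_le_inf_left _ hα.le)

theorem comap_sup_iInf_ker_weight_eq_top :
    H₂.toSubmodule.comap H₁.toSubmodule.subtype ⊔ ⨅ χ : Weight K H₁ A, χ.ker = ⊤ := by
  have h (α : Weight K H₂ A) (x : H₁) (hx : (x : A) ∈ rootSpace H₂ α) :
      x ∈ H₂.toSubmodule.comap H₁.toSubmodule.subtype ⊔ ⨅ χ : Weight K H₁ A, χ.ker := by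
    obtain hα | hα := eq_or_ne (α : H₂ → K) 0
    · refine Submodule.mem_sup_left ?_
      rwa [hα, rootSpace_zero_eq K A H₂] at hx
    · refine Submodule.mem_sup_right ((Submodule.mem_iInf _).mpr fun χ ↦ ?_)
      exact χ.apply_eq_zero_of_isNilpotent x (isNilpotent_ad_of_mem_rootSpace H₂ hα hx)
  have hle : H₁.toSubmodule ≤ (H₂.toSubmodule.comap H₁.toSubmodule.subtype ⊔
      ⨅ χ : Weight K H₁ A, χ.ker).map H₁.toSubmodule.subtype :=
    (toSubmodule_le_iSup_inf_rootSpace hA h₁ h₂).trans <|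
      iSup_le fun α x hx ↦ ⟨⟨x, hx.1⟩, h α ⟨x, hx.1⟩ hx.2, rfl⟩
  rw [eq_top_iff]
  rintro x -
  obtain ⟨x', hx', hxx'⟩ := hle x.2
  rwa [← Subtype.ext hxx']

theorem cartan_le : H₂ ≤ H₁ := by
  intro u hu
  refine (mem_cartan_iff_forall_mem_maxGenEigenspace_ad H₁).mpr fun x hx ↦ ?_
  obtain ⟨x₀, hx₀, z, hz, hxz⟩ := Submodule.mem_sup.mp <|
    show (⟨x, hx⟩ : H₁) ∈ _ from
      comap_sup_iInf_ker_weight_eq_top hA h₁ h₂ ▸ Submodule.mem_top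
  have hχ (χ : Weight K H₁ A) : χ ⟨x, hx⟩ = χ x₀ := by
    have hχz : χ z = 0 := (Submodule.mem_iInf _).mp hz χ
    rw [← hxz, map_add, hχz, add_zero]
  rw [maxGenEigenspace_ad_zero_eq_of_forall_weight_apply_eq H₁ hχ]
  exact (mem_cartan_iff_forall_mem_maxGenEigenspace_ad H₂).mp hu x₀ hx₀

end TwoCartans

end HasCanonicalRootDecomposition

theorem leftSymmetric_canonical_decomposition_unique_general [CharZero K]
    (hA : IsLeftSymmetric_s12 mul) (H₁ H₂ : LieSubalgebra K A)
    [H₁.IsCartanSubalgebra] [H₂.IsCartanSubalgebra]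
    [IsTriangularizable K H₁ A] [IsTriangularizable K H₂ A]
    (h₁ : HasCanonicalRootDecomposition mul H₁) (h₂ : HasCanonicalRootDecomposition mul H₂) :
    H₁ = H₂ :=
  le_antisymm (h₂.cartan_le hA h₁) (h₁.cartan_le hA h₂)

end LeftSymmetric

/-- The canonical decomposition of a finite-dimensional complete left-symmetric algebra
over `ℂ` is unique: two Cartan subalgebras for which the root decomposition is canonical
coincide. -/
theorem leftSymmetric_canonical_decomposition_unique (A : Type*)
    [LieRing A] [LieAlgebra ℂ A] [FiniteDimensional ℂ A]
    (mul : A →ₗ[ℂ] A →ₗ[ℂ] A)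
    (hbr : ∀ x y : A, ⁅x, y⁆ = mul x y - mul y x)
    (hls : ∀ x y z : A,
      mul x (mul y z) - mul (mul x y) z = mul y (mul x z) - mul (mul y x) z)
    (hcomplete : ∀ x : A, IsNilpotent (mul.flip x))
    (H₁ H₂ : LieSubalgebra ℂ A)
    (hH₁ : H₁.IsCartanSubalgebra) (hH₂ : H₂.IsCartanSubalgebra)
    (hcanon₁ : ∀ χ : H₁ → ℂ,
      (⨅ x : H₁, Module.End.maxGenEigenspace (mul (x : A)) (χ x)) =
        ⨅ x : H₁, Module.End.maxGenEigenspace (mul (x : A) - mul.flip (x : A)) (χ x))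
    (hcanon₂ : ∀ χ : H₂ → ℂ,
      (⨅ x : H₂, Module.End.maxGenEigenspace (mul (x : A)) (χ x)) =
        ⨅ x : H₂, Module.End.maxGenEigenspace (mul (x : A) - mul.flip (x : A)) (χ x)) :
    H₁ = H₂ :=
  leftSymmetric_canonical_decomposition_unique_general ⟨hbr, hls⟩ H₁ H₂ hcanon₁ hcanon₂
end
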